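/- For all A, B ∈ [0, π/4], |sin(3A) − sin(3B)| ≤ 3·|sin(A) − sin(B)|. -/

import Mathlib

/-!
By the triple angle formula, with `a = sin A` and `b = sin B`,
`sin (3A) - sin (3B) = (3 - 4 (a² + ab + b²)) (a - b)`.
On `[0, π/4]` the sine takes values in `[0, √2/2]`, so `0 ≤ a² + ab + b² ≤ 3/2` and the first
factor has absolute value at most `3`.
-/

/-- For all A, B ∈ [0, π/4], |sin(3A) − sin(3B)| ≤ 3·|sin(A) − sin(B)|. -/
theorem sin_three_mul_lipschitz (A B : ℝ) (hA : A ∈ Set.Icc 0 (Real.pi / 4))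
    (hB : B ∈ Set.Icc 0 (Real.pi / 4)) :
    |Real.sin (3 * A) - Real.sin (3 * B)| ≤ 3 * |Real.sin A - Real.sin B| := by
  have key : ∀ x ∈ Set.Icc 0 (Real.pi / 4), 0 ≤ Real.sin x ∧ Real.sin x ^ 2 ≤ 1 / 2 := by
    rintro x ⟨h0, h1⟩
    have hpi := Real.pi_pos
    have hs : 0 ≤ Real.sin x := Real.sin_nonneg_of_nonneg_of_le_pi h0 (by linarith)
    have hle : Real.sin x ≤ √2 / 2 := by
      rw [← Real.sin_pi_div_four]
      exact Real.sin_le_sin_of_le_of_le_pi_div_two (by linarith) (by linarith) h1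
    refine ⟨hs, ?_⟩
    have h2 : √2 ^ 2 = (2 : ℝ) := Real.sq_sqrt (by norm_num)
    nlinarith [pow_le_pow_left₀ hs hle 2]
  obtain ⟨ha, ha2⟩ := key A hA
  obtain ⟨hb, hb2⟩ := key B hB
  rw [Real.sin_three_mul, Real.sin_three_mul]
  generalize Real.sin A = a at *
  generalize Real.sin B = b at *
  have hfac : 3 * a - 4 * a ^ 3 - (3 * b - 4 * b ^ 3)
      = (3 - 4 * (a ^ 2 + a * b + b ^ 2)) * (a - b) := by ring
  rw [hfac, abs_mul]
  gcongr
  rw [abs_le]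
  constructor <;> nlinarith [sq_nonneg (a - b), mul_nonneg ha hb, sq_nonneg a, sq_nonneg b]
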